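/- arXiv:1710.07429 — 2 statements merged into one kernel-verified Lean document; each statement's English description precedes it below -/
import Mathlib

section
/- There exists a universal constant c > 0 such that for any halfspace f = 1{∑ a_i x_i > t} on {-1,1}^n with ∑ a_i² = 1 and E[f] ≤ 1/2, the degree-1 Fourier weight satisfies W¹(f) ≥ c·E[f]²·log(1/E[f]). -/
open Finset

noncomputable section
open scoped Classical

/-- The ±1 value associated to a Boolean bit. -/
def sgn1 (b : Bool) : ℝ := if b then 1 else -1

/-- Probability of an event under the uniform measure on `{-1,1}^n`. -/
def cubePr (n : ℕ) (P : (Fin n → Bool) → Prop) : ℝ :=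
  ((univ.filter P).card : ℝ) / 2 ^ n

/-- Expectation of a function under the uniform measure on `{-1,1}^n`. -/
def cubeE (n : ℕ) (f : (Fin n → Bool) → ℝ) : ℝ := (∑ x, f x) / 2 ^ n

/-- The linear form `a · x = ∑ aᵢ xᵢ` on `{-1,1}^n`. -/
def lin (n : ℕ) (a : Fin n → ℝ) (x : Fin n → Bool) : ℝ := ∑ i, a i * sgn1 (x i)

/-- The halfspace `1{a · x > t}` as a 0/1-valued function. -/
def halfspace (n : ℕ) (a : Fin n → ℝ) (t : ℝ) (x : Fin n → Bool) : ℝ :=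
  if t < lin n a x then 1 else 0

/-- The influence of coordinate `i` on `f`: the probability that flipping
coordinate `i` changes the value of `f`. -/
def infl (n : ℕ) (i : Fin n) (f : (Fin n → Bool) → ℝ) : ℝ :=
  cubePr n (fun x => f x ≠ f (Function.update x i (!x i)))

/-- The degree-1 Fourier coefficient `f̂({i}) = E[f(x)·xᵢ]`. -/
def fCoeff (n : ℕ) (f : (Fin n → Bool) → ℝ) (i : Fin n) : ℝ :=
  cubeE n (fun x => f x * sgn1 (x i))

/-- The degree-1 Fourier weight `W¹(f) = ∑ᵢ f̂({i})²`. -/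
def W1 (n : ℕ) (f : (Fin n → Bool) → ℝ) : ℝ := ∑ i, (fCoeff n f i) ^ 2

/-!
Write `p = E[f]` and let `m = f̂ / p` be the center of mass of the halfspace, so that
`W¹(f) = p² ∑ mᵢ²`. Being an average of points of the halfspace, `m` satisfies `t < ∑ aᵢ mᵢ`. Hence
under the product measure on the cube with mean `m` the linear form exceeds its own mean, and so
lies in the halfspace, with probability bounded below: a centered random variable whose fourth
moment is at most `K` times the square of its variance is nonnegative with probability at least
`1 / (4K)`. Biases close to `±1` would spoil the fourth moment, so large `mᵢ` are first rounded to
`±1` in the direction of `aᵢ`, which only increases the mean. The density of the tilted measure has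
squared `L²` norm `∏ (1 + vᵢ²) ≤ exp (3 ∑ mᵢ²)`, so Cauchy-Schwarz gives `p ≥ exp (-3 ∑ mᵢ²) / 144`,
that is `log (1 / p) ≤ 5 + 3 ∑ mᵢ²`. The additive constant is absorbed by `∑ mᵢ² ≥ 1 / 3`, which
holds because `E[f ∑ aᵢ xᵢ] ≥ p E|∑ aᵢ xᵢ|` when `p ≤ 1 / 2`, together with Khinchine's inequality.
-/

open scoped BigOperators

section FourthMoment

variable {α β : Type*} [Fintype α] [Fintype β]

/-- Under the probability weights `w` on a finite type, the random variable `Z` is centered, has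
variance `V`, and has fourth moment at most `K * V ^ 2`. The variance is carried as a parameter
so that it can be tracked through sums of independent variables. -/
structure HasKurtosisLE (w Z : α → ℝ) (V K : ℝ) : Prop where
  weight_nonneg : ∀ x, 0 ≤ w x
  sum_weight : ∑ x, w x = 1
  mean : ∑ x, w x * Z x = 0
  variance : ∑ x, w x * Z x ^ 2 = V
  fourth_moment : ∑ x, w x * Z x ^ 4 ≤ K * V ^ 2

namespace HasKurtosisLE

variable {w Z : α → ℝ} {u Y : β → ℝ} {V U K : ℝ}

lemma variance_nonneg (h : HasKurtosisLE w Z V K) : 0 ≤ V :=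
  h.variance ▸ sum_nonneg fun x _ => mul_nonneg (h.weight_nonneg x) (sq_nonneg _)

lemma of_equiv {w Z : β → ℝ} (e : α ≃ β)
    (h : HasKurtosisLE (fun x => w (e x)) (fun x => Z (e x)) V K) : HasKurtosisLE w Z V K where
  weight_nonneg y := by simpa using h.weight_nonneg (e.symm y)
  sum_weight := by rw [← e.sum_comp, h.sum_weight]
  mean := by rw [← e.sum_comp, h.mean]
  variance := by rw [← e.sum_comp, h.variance]
  fourth_moment := by rw [← e.sum_comp]; exact h.fourth_moment

lemma sum_prod_mul_add_pow_four {L : ℝ} (hZ : HasKurtosisLE w Z V K)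
    (hY : HasKurtosisLE u Y U L) :
    ∑ p : α × β, w p.1 * u p.2 * (Z p.1 + Y p.2) ^ 4 =
      ∑ x, w x * Z x ^ 4 + 6 * (V * U) + ∑ y, u y * Y y ^ 4 :=
  calc
    _ = ∑ x, ∑ y, ((w x * Z x ^ 4) * u y + 4 * ((w x * Z x ^ 3) * (u y * Y y)) +
          6 * ((w x * Z x ^ 2) * (u y * Y y ^ 2)) + 4 * ((w x * Z x) * (u y * Y y ^ 3)) +
          w x * (u y * Y y ^ 4)) := by
      rw [Fintype.sum_prod_type]
      exact sum_congr rfl fun x _ => sum_congr rfl fun y _ => by ring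
    _ = _ := by
      simp only [sum_add_distrib, ← mul_sum, ← sum_mul, hZ.sum_weight, hZ.mean, hZ.variance,
        hY.sum_weight, hY.mean, hY.variance]
      ring

-- The cross term `6 V U` of the fourth moment is absorbed by the `2 K V U` of `K (V + U) ^ 2`.
lemma prod_add (hZ : HasKurtosisLE w Z V K) (hY : HasKurtosisLE u Y U K) (hK : 3 ≤ K) :
    HasKurtosisLE (fun p : α × β => w p.1 * u p.2) (fun p => Z p.1 + Y p.2) (V + U) K where
  weight_nonneg p := mul_nonneg (hZ.weight_nonneg _) (hY.weight_nonneg _)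
  sum_weight := by
    simp only [Fintype.sum_prod_type, ← mul_sum, hZ.sum_weight, hY.sum_weight, mul_one]
  mean := by
    have expand : ∀ x y, w x * u y * (Z x + Y y) = w x * Z x * u y + w x * (u y * Y y) :=
      fun x y => by ring
    simp only [Fintype.sum_prod_type, expand, sum_add_distrib, ← mul_sum, ← sum_mul,
      hZ.mean, hY.mean, zero_mul, mul_zero, sum_const_zero, add_zero]
  variance := by
    have expand : ∀ x y, w x * u y * (Z x + Y y) ^ 2 =
        w x * Z x ^ 2 * u y + 2 * (w x * Z x * (u y * Y y)) + w x * (u y * Y y ^ 2) :=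
      fun x y => by ring
    simp only [Fintype.sum_prod_type, expand, sum_add_distrib, ← mul_sum, ← sum_mul,
      hZ.sum_weight, hZ.mean, hZ.variance, hY.sum_weight, hY.mean, hY.variance]
    ring
  fourth_moment := by
    rw [sum_prod_mul_add_pow_four hZ hY]
    have cross : 3 * (V * U) ≤ K * (V * U) :=
      mul_le_mul_of_nonneg_right hK (mul_nonneg hZ.variance_nonneg hY.variance_nonneg)
    linarith [hZ.fourth_moment, hY.fourth_moment]

lemma pi_sum {n : ℕ} {w Z : Fin n → α → ℝ} {V : Fin n → ℝ}
    (h : ∀ i, HasKurtosisLE (w i) (Z i) (V i) K) (hK : 3 ≤ K) :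
    HasKurtosisLE (fun x : Fin n → α => ∏ i, w i (x i)) (fun x => ∑ i, Z i (x i)) (∑ i, V i) K := by
  induction n with
  | zero => constructor <;> simp
  | succ n ih =>
    refine of_equiv (Fin.consEquiv fun _ => α) ?_
    simpa [Fin.consEquiv, Fin.prod_univ_succ, Fin.sum_univ_succ]
      using (h 0).prod_add (ih fun i => h i.succ) hK

-- Two applications of Cauchy-Schwarz interpolate the second moment between the first and fourth.
lemma variance_le_mul_sq_sum_abs (h : HasKurtosisLE w Z V K) (hK : 0 ≤ K) :
    V ≤ K * (∑ x, w x * |Z x|) ^ 2 := by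
  set A := ∑ x, w x * |Z x|
  set T := ∑ x, w x * |Z x| ^ 3
  have second_le : V ^ 2 ≤ A * T := by
    rw [← h.variance]
    refine sum_sq_le_sum_mul_sum_of_sq_le_mul _
      (fun x _ => mul_nonneg (h.weight_nonneg x) (abs_nonneg _))
      (fun x _ => mul_nonneg (h.weight_nonneg x) (by positivity)) fun x _ => ?_
    rw [← sq_abs (Z x)]
    exact le_of_eq (by ring)
  have third_le : T ^ 2 ≤ V * (K * V ^ 2) := by
    refine le_trans ?_ (mul_le_mul_of_nonneg_left h.fourth_moment h.variance_nonneg)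
    rw [← h.variance]
    refine sum_sq_le_sum_mul_sum_of_sq_le_mul _
      (fun x _ => mul_nonneg (h.weight_nonneg x) (sq_nonneg _))
      (fun x _ => mul_nonneg (h.weight_nonneg x) (by positivity)) fun x _ => ?_
    rw [← even_two.pow_abs (Z x), ← (by decide : Even 4).pow_abs (Z x)]
    exact le_of_eq (by ring)
  rcases h.variance_nonneg.eq_or_lt with hV | hV
  · rw [← hV]
    positivity
  · refine le_of_mul_le_mul_right ?_ (pow_pos hV 3)
    calc
      V * V ^ 3 = (V ^ 2) ^ 2 := by ring
      _ ≤ (A * T) ^ 2 := pow_le_pow_left₀ (sq_nonneg V) second_le 2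
      _ = A ^ 2 * T ^ 2 := by ring
      _ ≤ A ^ 2 * (V * (K * V ^ 2)) := mul_le_mul_of_nonneg_left third_le (sq_nonneg A)
      _ = K * A ^ 2 * V ^ 3 := by ring

-- As `Z` is centered, the positive part of `Z` has mean half of that of `|Z|`.
lemma sq_sum_abs_le_mul_sum_ite_nonneg (h : HasKurtosisLE w Z V K) :
    (∑ x, w x * |Z x|) ^ 2 ≤ 4 * ((∑ x, w x * if 0 ≤ Z x then 1 else 0) * V) := by
  set I : α → ℝ := fun x => if 0 ≤ Z x then 1 else 0 with hI
  have I_nonneg : ∀ x, 0 ≤ I x := fun x => by simp only [hI]; split_ifs <;> norm_num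
  have I_le_one : ∀ x, I x ≤ 1 := fun x => by simp only [hI]; split_ifs <;> norm_num
  have sum_pos_part : ∑ x, w x * |Z x| = 2 * ∑ x, w x * (I x * Z x) := by
    have abs_eq : ∀ x, |Z x| = 2 * (I x * Z x) - Z x := fun x => by
      simp only [hI]
      split_ifs with hx
      · rw [abs_of_nonneg hx]; ring
      · rw [abs_of_neg (not_le.mp hx)]; ring
    simp only [abs_eq, mul_sub, sum_sub_distrib, h.mean, sub_zero, mul_left_comm _ (2 : ℝ),
      ← mul_sum]
  have cauchy_schwarz :
      (∑ x, w x * (I x * Z x)) ^ 2 ≤ (∑ x, w x * I x) * ∑ x, w x * (I x * Z x ^ 2) :=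
    sum_sq_le_sum_mul_sum_of_sq_le_mul _
      (fun x _ => mul_nonneg (h.weight_nonneg x) (I_nonneg x))
      (fun x _ => mul_nonneg (h.weight_nonneg x) (mul_nonneg (I_nonneg x) (sq_nonneg _)))
      fun x _ => le_of_eq (by ring)
  have second_le : ∑ x, w x * (I x * Z x ^ 2) ≤ V := by
    rw [← h.variance]
    exact sum_le_sum fun x _ => mul_le_mul_of_nonneg_left
      (mul_le_of_le_one_left (sq_nonneg _) (I_le_one x)) (h.weight_nonneg x)
  have mass_nonneg : 0 ≤ ∑ x, w x * I x :=
    sum_nonneg fun x _ => mul_nonneg (h.weight_nonneg x) (I_nonneg x)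
  rw [sum_pos_part, mul_pow]
  linarith [cauchy_schwarz.trans (mul_le_mul_of_nonneg_left second_le mass_nonneg)]

lemma sum_ite_nonneg_eq_one (h : HasKurtosisLE w Z 0 K) :
    ∑ x, w x * (if 0 ≤ Z x then 1 else 0) = 1 := by
  refine (sum_congr rfl fun x _ => ?_).trans h.sum_weight
  have hx : w x * Z x ^ 2 = 0 :=
    (sum_eq_zero_iff_of_nonneg fun x _ => mul_nonneg (h.weight_nonneg x) (sq_nonneg (Z x))).mp
      h.variance x (mem_univ x)
  rcases mul_eq_zero.mp hx with hw | hZ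
  · simp [hw]
  · simp [pow_eq_zero_iff two_ne_zero |>.mp hZ]

lemma one_le_mul_sum_ite_nonneg (h : HasKurtosisLE w Z V K) (hK : 1 ≤ K) :
    1 ≤ 4 * K * ∑ x, w x * (if 0 ≤ Z x then 1 else 0) := by
  rcases h.variance_nonneg.eq_or_lt with rfl | hV
  · rw [h.sum_ite_nonneg_eq_one]
    linarith
  · have hK0 : 0 ≤ K := zero_le_one.trans hK
    refine le_of_mul_le_mul_right ?_ hV
    calc
      1 * V ≤ K * (∑ x, w x * |Z x|) ^ 2 := by
        rw [one_mul]
        exact h.variance_le_mul_sq_sum_abs hK0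
      _ ≤ K * (4 * ((∑ x, w x * if 0 ≤ Z x then 1 else 0) * V)) :=
        mul_le_mul_of_nonneg_left h.sq_sum_abs_le_mul_sum_ite_nonneg hK0
      _ = _ := by ring

end HasKurtosisLE

end FourthMoment

section BiasedCube

lemma sgn1_true : sgn1 true = 1 := if_pos rfl

lemma sgn1_false : sgn1 false = -1 := if_neg Bool.false_ne_true

/-- The law of a `±1` bit with mean `v`, as a weight on `Bool`. It is nonnegative only for
`|v| ≤ 1`. -/
def bitWeight (v : ℝ) (b : Bool) : ℝ := (1 + v * sgn1 b) / 2

/-- The product measure on the cube under which the coordinates are independent `±1` bits with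
means `v i`. -/
def biasedWeight {n : ℕ} (v : Fin n → ℝ) (x : Fin n → Bool) : ℝ := ∏ i, bitWeight (v i) (x i)

variable {n : ℕ}

-- The kurtosis of a nonconstant bit with mean `v` is `(1 + 3 v²) / (1 - v²)`.
lemma hasKurtosisLE_bitWeight (a : ℝ) {v : ℝ} (hv : v ^ 2 ≤ 1 / 3 ∨ v ^ 2 = 1) :
    HasKurtosisLE (bitWeight v) (fun b => a * (sgn1 b - v)) (a ^ 2 * (1 - v ^ 2)) 3 where
  weight_nonneg b := by
    have hv1 : |v| ≤ 1 := (sq_le_one_iff_abs_le_one v).mp (by rcases hv with h | h <;> linarith)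
    cases b <;> simp only [bitWeight, sgn1_true, sgn1_false] <;> linarith [abs_le.mp hv1]
  sum_weight := by simp only [Fintype.sum_bool, bitWeight, sgn1_true, sgn1_false]; ring
  mean := by simp only [Fintype.sum_bool, bitWeight, sgn1_true, sgn1_false]; ring
  variance := by simp only [Fintype.sum_bool, bitWeight, sgn1_true, sgn1_false]; ring
  fourth_moment := by
    have bit : (1 - v ^ 2) * (1 + 3 * v ^ 2) ≤ 3 * (1 - v ^ 2) ^ 2 := by
      rcases hv with h | h
      · nlinarith [sq_nonneg v]
      · simp [h]
    calc
      _ = a ^ 4 * ((1 - v ^ 2) * (1 + 3 * v ^ 2)) := by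
        simp only [Fintype.sum_bool, bitWeight, sgn1_true, sgn1_false]; ring
      _ ≤ a ^ 4 * (3 * (1 - v ^ 2) ^ 2) := mul_le_mul_of_nonneg_left bit (by positivity)
      _ = _ := by ring

lemma hasKurtosisLE_biasedWeight (a : Fin n → ℝ) {v : Fin n → ℝ}
    (hv : ∀ i, v i ^ 2 ≤ 1 / 3 ∨ v i ^ 2 = 1) :
    HasKurtosisLE (biasedWeight v) (fun x => lin n a x - ∑ i, a i * v i)
      (∑ i, a i ^ 2 * (1 - v i ^ 2)) 3 := by
  have moments := HasKurtosisLE.pi_sum (fun i => hasKurtosisLE_bitWeight (a i) (hv i)) le_rfl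
  simp only [mul_sub (a _) (sgn1 _), sum_sub_distrib (f := fun i => a i * sgn1 _)] at moments
  exact moments

lemma sum_biasedWeight_sq (v : Fin n → ℝ) :
    ∑ x, biasedWeight v x ^ 2 = (∏ i, (1 + v i ^ 2)) / 2 ^ n :=
  calc
    _ = ∏ i, ∑ b, bitWeight (v i) b ^ 2 := by
      simp only [biasedWeight, ← prod_pow, prod_univ_sum, Fintype.piFinset_univ]
    _ = ∏ i, (1 + v i ^ 2) / 2 := prod_congr rfl fun i _ => by
      simp only [Fintype.sum_bool, bitWeight, sgn1_true, sgn1_false]; ring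
    _ = _ := by simp [prod_div_distrib]

lemma sq_sum_biasedWeight_mul_le (v : Fin n → ℝ) (f : (Fin n → Bool) → ℝ) :
    (∑ x, biasedWeight v x * f x) ^ 2 ≤ (∏ i, (1 + v i ^ 2)) * cubeE n (fun x => f x ^ 2) := by
  have cauchy_schwarz := sum_mul_sq_le_sq_mul_sq univ (biasedWeight v) f
  rw [sum_biasedWeight_sq] at cauchy_schwarz
  rwa [cubeE, mul_div_assoc', ← div_mul_eq_mul_div]

lemma cubeE_eq_expect (f : (Fin n → Bool) → ℝ) : cubeE n f = 𝔼 x, f x := by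
  simp [cubeE, Fintype.expect_eq_sum_div_card]

lemma cubeE_eq_sum_biasedWeight_zero_mul (f : (Fin n → Bool) → ℝ) :
    cubeE n f = ∑ x, biasedWeight 0 x * f x := by
  simp [cubeE, biasedWeight, bitWeight, ← mul_sum, div_eq_inv_mul]

lemma hasKurtosisLE_biasedWeight_zero (a : Fin n → ℝ) :
    HasKurtosisLE (biasedWeight 0) (lin n a) (∑ i, a i ^ 2) 3 := by
  simpa using hasKurtosisLE_biasedWeight a (v := 0) fun _ => Or.inl (by norm_num)

lemma cubeE_lin (a : Fin n → ℝ) : cubeE n (lin n a) = 0 := by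
  rw [cubeE_eq_sum_biasedWeight_zero_mul, (hasKurtosisLE_biasedWeight_zero a).mean]

lemma sum_sq_le_three_mul_sq_cubeE_abs_lin (a : Fin n → ℝ) :
    ∑ i, a i ^ 2 ≤ 3 * cubeE n (fun x => |lin n a x|) ^ 2 := by
  rw [cubeE_eq_sum_biasedWeight_zero_mul]
  exact (hasKurtosisLE_biasedWeight_zero a).variance_le_mul_sq_sum_abs zero_le_three

lemma lin_not (a : Fin n → ℝ) (x : Fin n → Bool) : lin n a (fun i => !x i) = -lin n a x := by
  simp only [lin, ← sum_neg_distrib]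
  exact sum_congr rfl fun i _ => by cases x i <;> simp [sgn1_true, sgn1_false]

lemma cubeE_abs_lin_le_cubeE_abs_lin_sub (a : Fin n → ℝ) (t : ℝ) :
    cubeE n (fun x => |lin n a x|) ≤ cubeE n (fun x => |lin n a x - t|) := by
  simp only [cubeE_eq_expect]
  have reflect : 𝔼 x, |lin n a x + t| = 𝔼 x, |lin n a x - t| :=
    Fintype.expect_equiv (Equiv.piCongrRight fun _ => Equiv.boolNot) _ _ fun x => by
      rw [show Equiv.piCongrRight (fun _ => Equiv.boolNot) x = fun i => !x i from rfl, lin_not,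
        ← abs_neg, neg_add']
  have triangle : 𝔼 x, 2 * |lin n a x| ≤ 𝔼 x, (|lin n a x + t| + |lin n a x - t|) :=
    expect_le_expect fun x _ => by
      rw [← abs_two, ← abs_mul]
      exact (congrArg abs (by ring)).trans_le (abs_add_le (lin n a x + t) (lin n a x - t))
  rw [← mul_expect, expect_add_distrib, reflect] at triangle
  linarith

end BiasedCube

section DegreeOne

variable {n : ℕ}

lemma sum_mul_fCoeff (a : Fin n → ℝ) (f : (Fin n → Bool) → ℝ) :
    ∑ i, a i * fCoeff n f i = cubeE n (fun x => f x * lin n a x) := by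
  simp only [fCoeff, cubeE_eq_expect, lin, mul_expect, mul_sum, expect_sum_comm, mul_left_comm]

lemma sq_cubeE_mul_lin_le (a : Fin n → ℝ) (f : (Fin n → Bool) → ℝ) :
    cubeE n (fun x => f x * lin n a x) ^ 2 ≤ (∑ i, a i ^ 2) * W1 n f := by
  rw [← sum_mul_fCoeff]
  exact sum_mul_sq_le_sq_mul_sq univ a (fCoeff n f)

lemma abs_fCoeff_le (f : (Fin n → Bool) → ℝ) (i : Fin n) :
    |fCoeff n f i| ≤ cubeE n (fun x => |f x|) := by
  simp only [fCoeff, cubeE_eq_expect]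
  refine (abs_expect_le _ _).trans_eq (expect_congr rfl fun x _ => ?_)
  cases x i <;> simp [sgn1_true, sgn1_false]

/-- The mean of `x` under the probability density proportional to `f ≥ 0`; for `f` the indicator
of a set this is the center of mass of the set. It is `0` when `E[f] = 0`. -/
def barycenter (f : (Fin n → Bool) → ℝ) (i : Fin n) : ℝ := fCoeff n f i / cubeE n f

lemma W1_eq_sq_cubeE_mul_sum_barycenter_sq {f : (Fin n → Bool) → ℝ} (hf : cubeE n f ≠ 0) :
    W1 n f = cubeE n f ^ 2 * ∑ i, barycenter f i ^ 2 := by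
  simp only [W1, barycenter, div_pow, ← sum_div]
  field_simp

lemma sum_mul_barycenter (a : Fin n → ℝ) (f : (Fin n → Bool) → ℝ) :
    ∑ i, a i * barycenter f i = cubeE n (fun x => f x * lin n a x) / cubeE n f := by
  simp only [barycenter, mul_div_assoc', ← sum_div, sum_mul_fCoeff]

lemma abs_barycenter_le_one {f : (Fin n → Bool) → ℝ} (hf : ∀ x, 0 ≤ f x) (i : Fin n) :
    |barycenter f i| ≤ 1 := by
  have hE : 0 ≤ cubeE n f := by
    rw [cubeE_eq_expect]
    exact expect_nonneg fun x _ => hf x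
  rw [barycenter, abs_div, abs_of_nonneg hE]
  refine div_le_one_of_le₀ ?_ hE
  simpa only [abs_of_nonneg (hf _)] using abs_fCoeff_le f i

end DegreeOne

section Rounding

/-- The bias `m` rounded to the endpoint `±1` of the same sign as `a` unless `m` is small. The
cutoff is the one at which a biased bit has kurtosis `3`. -/
def roundedBias (a m : ℝ) : ℝ := if m ^ 2 ≤ 1 / 3 then m else if 0 ≤ a then 1 else -1

lemma roundedBias_sq (a m : ℝ) : roundedBias a m ^ 2 ≤ 1 / 3 ∨ roundedBias a m ^ 2 = 1 := by
  unfold roundedBias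
  split_ifs with hm ha
  · exact Or.inl hm
  all_goals exact Or.inr (by norm_num)

lemma mul_le_mul_roundedBias (a : ℝ) {m : ℝ} (hm : |m| ≤ 1) : a * m ≤ a * roundedBias a m := by
  obtain ⟨hm_ge, hm_le⟩ := abs_le.mp hm
  unfold roundedBias
  split_ifs with hm_small ha
  · exact le_rfl
  · exact mul_le_mul_of_nonneg_left hm_le ha
  · exact mul_le_mul_of_nonpos_left hm_ge (not_le.mp ha).le

lemma one_add_roundedBias_sq_le_exp (a m : ℝ) :
    1 + roundedBias a m ^ 2 ≤ Real.exp (3 * m ^ 2) := by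
  refine le_trans ?_ (Real.add_one_le_exp _)
  unfold roundedBias
  split_ifs <;> nlinarith [sq_nonneg m]

end Rounding

section Halfspace

variable {n : ℕ} {a : Fin n → ℝ} {t : ℝ} {x : Fin n → Bool}

lemma halfspace_of_lt (hx : t < lin n a x) : halfspace n a t x = 1 := if_pos hx

lemma halfspace_of_le (hx : lin n a x ≤ t) : halfspace n a t x = 0 := if_neg hx.not_gt

lemma halfspace_nonneg (a : Fin n → ℝ) (t : ℝ) (x : Fin n → Bool) : 0 ≤ halfspace n a t x := by
  unfold halfspace
  split_ifs <;> norm_num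

lemma halfspace_sq (a : Fin n → ℝ) (t : ℝ) (x : Fin n → Bool) :
    halfspace n a t x ^ 2 = halfspace n a t x := by
  unfold halfspace
  split_ifs <;> norm_num

lemma sum_sq_pos_of_cubeE_halfspace (hpos : 0 < cubeE n (halfspace n a t))
    (hlt : cubeE n (halfspace n a t) < 1) : 0 < ∑ i, a i ^ 2 := by
  refine (sum_nonneg fun i _ => sq_nonneg (a i)).lt_of_ne' fun hsum => ?_
  have ha : a = 0 := funext fun i =>
    pow_eq_zero_iff two_ne_zero |>.mp <|
      (sum_eq_zero_iff_of_nonneg fun i _ => sq_nonneg (a i)).mp hsum i (mem_univ i)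
  have hconst : cubeE n (halfspace n a t) = if t < 0 then 1 else 0 := by
    simp [cubeE_eq_expect, halfspace, lin, ha]
  rw [hconst] at hpos hlt
  split_ifs at hpos hlt <;> exact lt_irrefl _ ‹_›

-- On either side of the threshold `|f - E[f]| ≥ E[f]`, and `f - E[f]` has the sign of `lin - t`.
lemma cubeE_halfspace_mul_cubeE_abs_lin_sub_le (hp : cubeE n (halfspace n a t) ≤ 1 / 2) :
    cubeE n (halfspace n a t) * cubeE n (fun x => |lin n a x - t|) ≤
      cubeE n (fun x => halfspace n a t x * lin n a x) := by
  set f := halfspace n a t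
  set p := cubeE n f with hp_def
  have hlin : 𝔼 x, lin n a x = 0 := by rw [← cubeE_eq_expect, cubeE_lin]
  have hf : 𝔼 x, f x = p := by rw [hp_def, cubeE_eq_expect]
  simp only [cubeE_eq_expect, mul_expect]
  calc
    𝔼 x, p * |lin n a x - t| ≤ 𝔼 x, (f x - p) * (lin n a x - t) := by
      refine expect_le_expect fun x _ => ?_
      rcases lt_or_ge t (lin n a x) with hx | hx
      · rw [show f x = 1 from halfspace_of_lt hx, abs_of_pos (sub_pos.mpr hx)]
        exact mul_le_mul_of_nonneg_right (by linarith) (sub_pos.mpr hx).le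
      · rw [show f x = 0 from halfspace_of_le hx, abs_of_nonpos (sub_nonpos.mpr hx)]
        linarith
    _ = 𝔼 x, (f x * lin n a x - p * lin n a x - t * f x + p * t) :=
      expect_congr rfl fun x _ => by ring
    _ = 𝔼 x, f x * lin n a x := by
      simp only [expect_add_distrib, expect_sub_distrib, ← mul_expect, Fintype.expect_const,
        hlin, hf]
      ring

lemma sq_cubeE_halfspace_le_three_mul_W1 (hpos : 0 < cubeE n (halfspace n a t))
    (hp : cubeE n (halfspace n a t) ≤ 1 / 2) :
    cubeE n (halfspace n a t) ^ 2 ≤ 3 * W1 n (halfspace n a t) := by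
  have hV : 0 < ∑ i, a i ^ 2 := sum_sq_pos_of_cubeE_halfspace hpos (by linarith)
  refine le_of_mul_le_mul_right ?_ hV
  set f := halfspace n a t
  set p := cubeE n f
  set A := cubeE n fun x => |lin n a x| with hA
  have hA_nonneg : 0 ≤ A := by
    rw [hA, cubeE_eq_expect]
    exact expect_nonneg fun x _ => abs_nonneg _
  have first_moment : p * A ≤ cubeE n fun x => f x * lin n a x :=
    (mul_le_mul_of_nonneg_left (cubeE_abs_lin_le_cubeE_abs_lin_sub a t) hpos.le).trans
      (cubeE_halfspace_mul_cubeE_abs_lin_sub_le hp)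
  calc
    p ^ 2 * ∑ i, a i ^ 2 ≤ p ^ 2 * (3 * A ^ 2) :=
      mul_le_mul_of_nonneg_left (sum_sq_le_three_mul_sq_cubeE_abs_lin a) (sq_nonneg p)
    _ = 3 * (p * A) ^ 2 := by ring
    _ ≤ 3 * cubeE n (fun x => f x * lin n a x) ^ 2 := by gcongr
    _ ≤ 3 * ((∑ i, a i ^ 2) * W1 n f) := by gcongr; exact sq_cubeE_mul_lin_le a f
    _ = 3 * W1 n f * ∑ i, a i ^ 2 := by ring

lemma lt_sum_mul_barycenter_halfspace (hpos : 0 < cubeE n (halfspace n a t)) :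
    t < ∑ i, a i * barycenter (halfspace n a t) i := by
  rw [sum_mul_barycenter, lt_div_iff₀ hpos]
  rw [cubeE_eq_expect] at hpos
  simp only [cubeE_eq_expect, mul_expect]
  obtain ⟨x, -, hx⟩ := exists_ne_zero_of_expect_ne_zero hpos.ne'
  refine expect_lt_expect (fun y _ => ?_) ⟨x, mem_univ x, ?_⟩
  · rcases lt_or_ge t (lin n a y) with hy | hy
    · simpa [halfspace_of_lt hy] using hy.le
    · simp [halfspace_of_le hy]
  · have hlt : t < lin n a x := by
      by_contra hle
      exact hx (halfspace_of_le (not_lt.mp hle))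
    simpa [halfspace_of_lt hlt] using hlt

lemma one_le_mul_sum_biasedWeight_mul_halfspace {v : Fin n → ℝ}
    (hv : ∀ i, v i ^ 2 ≤ 1 / 3 ∨ v i ^ 2 = 1) (ht : t < ∑ i, a i * v i) :
    1 ≤ 12 * ∑ x, biasedWeight v x * halfspace n a t x := by
  have moments := hasKurtosisLE_biasedWeight a hv
  calc
    1 ≤ 4 * 3 * ∑ x, biasedWeight v x * (if 0 ≤ lin n a x - ∑ i, a i * v i then 1 else 0) :=
      moments.one_le_mul_sum_ite_nonneg (by norm_num)
    _ ≤ 4 * 3 * ∑ x, biasedWeight v x * halfspace n a t x := by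
      gcongr with x
      · exact moments.weight_nonneg x
      · split_ifs with hx
        · exact (halfspace_of_lt (ht.trans_le (sub_nonneg.mp hx))).ge
        · exact halfspace_nonneg a t x
    _ = _ := by norm_num

lemma one_le_mul_cubeE_halfspace_mul_prod {v : Fin n → ℝ}
    (hv : ∀ i, v i ^ 2 ≤ 1 / 3 ∨ v i ^ 2 = 1) (ht : t < ∑ i, a i * v i) :
    1 ≤ 144 * (cubeE n (halfspace n a t) * ∏ i, (1 + v i ^ 2)) := by
  have cauchy_schwarz := sq_sum_biasedWeight_mul_le v (halfspace n a t)
  simp only [halfspace_sq] at cauchy_schwarz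
  have mass_sq := one_le_pow₀ (one_le_mul_sum_biasedWeight_mul_halfspace hv ht) (n := 2)
  rw [mul_pow] at mass_sq
  linarith

lemma one_div_cubeE_halfspace_le (hpos : 0 < cubeE n (halfspace n a t)) :
    1 / cubeE n (halfspace n a t) ≤
      144 * Real.exp (3 * ∑ i, barycenter (halfspace n a t) i ^ 2) := by
  set m := barycenter (halfspace n a t)
  set v : Fin n → ℝ := fun i => roundedBias (a i) (m i)
  have ht : t < ∑ i, a i * v i :=
    (lt_sum_mul_barycenter_halfspace hpos).trans_le <| sum_le_sum fun i _ =>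
      mul_le_mul_roundedBias (a i) (abs_barycenter_le_one (halfspace_nonneg a t) i)
  have prod_le : ∏ i, (1 + v i ^ 2) ≤ Real.exp (3 * ∑ i, m i ^ 2) := by
    rw [mul_sum, Real.exp_sum]
    exact prod_le_prod (fun i _ => by positivity)
      fun i _ => one_add_roundedBias_sq_le_exp (a i) (m i)
  rw [div_le_iff₀ hpos]
  linarith [one_le_mul_cubeE_halfspace_mul_prod (fun i => roundedBias_sq (a i) (m i)) ht,
    mul_le_mul_of_nonneg_left prod_le hpos.le]

lemma log_one_div_cubeE_halfspace_le (hpos : 0 < cubeE n (halfspace n a t)) :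
    Real.log (1 / cubeE n (halfspace n a t)) ≤
      5 + 3 * ∑ i, barycenter (halfspace n a t) i ^ 2 := by
  have exp_five : (144 : ℝ) ≤ Real.exp 5 :=
    calc
      (144 : ℝ) ≤ 2.7182818283 ^ 5 := by norm_num
      _ ≤ Real.exp 1 ^ 5 := by gcongr; exact Real.exp_one_gt_d9.le
      _ = Real.exp 5 := by rw [← Real.exp_nat_mul]; norm_num
  rw [Real.log_le_iff_le_exp (by positivity), Real.exp_add]
  exact (one_div_cubeE_halfspace_le hpos).trans
    (mul_le_mul_of_nonneg_right exp_five (Real.exp_pos _).le)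

end Halfspace

theorem W1_halfspace_lower_bound_general (n : ℕ) (a : Fin n → ℝ) (t : ℝ)
    (hpos : 0 < cubeE n (halfspace n a t)) (hp : cubeE n (halfspace n a t) ≤ 1 / 2) :
    1 / 18 * cubeE n (halfspace n a t) ^ 2 * Real.log (1 / cubeE n (halfspace n a t)) ≤
      W1 n (halfspace n a t) := by
  set f := halfspace n a t
  set p := cubeE n f
  have weight_eq : W1 n f = p ^ 2 * ∑ i, barycenter f i ^ 2 :=
    W1_eq_sq_cubeE_mul_sum_barycenter_sq hpos.ne'
  have weight_ge : p ^ 2 ≤ 3 * W1 n f := sq_cubeE_halfspace_le_three_mul_W1 hpos hp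
  calc
    1 / 18 * p ^ 2 * Real.log (1 / p)
        ≤ 1 / 18 * p ^ 2 * (5 + 3 * ∑ i, barycenter f i ^ 2) :=
      mul_le_mul_of_nonneg_left (log_one_div_cubeE_halfspace_le hpos) (by positivity)
    _ = 1 / 18 * (5 * p ^ 2 + 3 * W1 n f) := by rw [weight_eq]; ring
    _ ≤ W1 n f := by linarith

/-- **Lower bound for the degree-1 Fourier weight of halfspaces.** There is a
universal `c > 0` such that any halfspace `f = 1{∑ aᵢxᵢ > t}` with `∑ aᵢ² = 1`
and `0 < E[f] ≤ 1/2` satisfies `W¹(f) ≥ c·E[f]²·log(1/E[f])`. -/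
theorem W1_halfspace_lower_bound :
    ∃ c : ℝ, 0 < c ∧ ∀ (n : ℕ) (a : Fin n → ℝ) (t : ℝ),
      (∑ i, (a i) ^ 2) = 1 →
      0 < cubeE n (halfspace n a t) → cubeE n (halfspace n a t) ≤ 1 / 2 →
      c * (cubeE n (halfspace n a t)) ^ 2 * Real.log (1 / cubeE n (halfspace n a t)) ≤
        W1 n (halfspace n a t) := by
  exact ⟨1 / 18, by norm_num, fun n a t _ => W1_halfspace_lower_bound_general n a t⟩

end
end

section
/- There exists a universal constant C such that the following holds. Let a ∈ ℝ_{≥0}^n with ∑ a_i² = 1 and a_1 ≥ ... ≥ a_n, and let f_s(x) = 1{a·x > s}. Then for every t ≥ s ≥ 0 with E[f_t] > 0, we have I_1(f_s)/E[f_s] ≤ C·I_1(f_t)/E[f_t]. -/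
open Finset

noncomputable section
open scoped Classical

/-!
Let `k` be a coordinate of maximal weight `α = |a k|` and let `X` be the signed sum of the other
weights. Then `I_k(f_s) = P(X ∈ (s - α, s + α])` and `E[f_s]` is the average of `P(X > s - α)` and
`P(X > s + α)`, so everything reduces to bounding `P(X ∈ (s - α, s + α]) P(X > t + α)`.

Take two independent copies of `X` and reveal their signs simultaneously. If one copy ends in
`(s - α, s + α]` and the other above `t + α`, the difference of the partial sums exceeds `t - s` at
some first moment, and then by at most `2 α`. Exchanging the two initial segments at that moment is
a bijection, and it moves the first copy into `(t - α, t + 3 α]` and the second above `s - α`.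

It remains to return from `(t - α, t + 3 α]` to `(t - α, t + α]`, for which it is enough to compare
windows at distance about `α`. If all weights are at most `α / 2`, reflecting the path at its first
passage above `α / 2` lowers its endpoint by an amount between `α` and `2 α`. If all weights exceed
`α / 2`, flipping a single `+` to `-` has the same effect, and flips are double counted with the
flipped weight. In general one conditions on the signs of the small weights.
-/

/-- The expectation of `φ (∑ᵢ εᵢ lᵢ)` for independent uniform signs `εᵢ`. The recursion reveals the
signs one at a time, which is what the path arguments induct on. -/
def rademacherE : List ℝ → (ℝ → ℝ) → ℝ
  | [], φ => φ 0
  | b :: l, φ => (rademacherE l (fun x => φ (b + x)) + rademacherE l (fun x => φ (-b + x))) / 2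

/-- The probability that `∑ᵢ εᵢ lᵢ` lies in `S`, for independent uniform signs `εᵢ`. -/
def rademacherPr (l : List ℝ) (S : Set ℝ) : ℝ := rademacherE l (S.indicator 1)

section rademacherE

lemma rademacherE_mono (l : List ℝ) {φ ψ : ℝ → ℝ} (h : ∀ x, φ x ≤ ψ x) :
    rademacherE l φ ≤ rademacherE l ψ := by
  induction l generalizing φ ψ with
  | nil => exact h 0
  | cons b l ih =>
    exact div_le_div_of_nonneg_right (add_le_add (ih fun x => h _) (ih fun x => h _)) zero_le_two

lemma rademacherE_add (l : List ℝ) (φ ψ : ℝ → ℝ) :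
    rademacherE l (fun x => φ x + ψ x) = rademacherE l φ + rademacherE l ψ := by
  induction l generalizing φ ψ with
  | nil => rfl
  | cons b l ih => simp only [rademacherE, ih]; ring

lemma rademacherE_const_mul (l : List ℝ) (c : ℝ) (φ : ℝ → ℝ) :
    rademacherE l (fun x => c * φ x) = c * rademacherE l φ := by
  induction l generalizing φ with
  | nil => rfl
  | cons b l ih => simp only [rademacherE, ih]; ring

lemma rademacherE_nonneg (l : List ℝ) {φ : ℝ → ℝ} (h : ∀ x, 0 ≤ φ x) : 0 ≤ rademacherE l φ := by
  induction l generalizing φ with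
  | nil => exact h 0
  | cons b l ih => exact div_nonneg (add_nonneg (ih fun x => h _) (ih fun x => h _)) zero_le_two

lemma rademacherE_append (l₁ l₂ : List ℝ) (φ : ℝ → ℝ) :
    rademacherE (l₁ ++ l₂) φ = rademacherE l₁ (fun x => rademacherE l₂ (fun y => φ (x + y))) := by
  induction l₁ generalizing φ with
  | nil => simp only [List.nil_append, rademacherE, zero_add]
  | cons b l ih => simp only [List.cons_append, rademacherE, ih, add_assoc]

lemma rademacherE_perm {l₁ l₂ : List ℝ} (h : l₁.Perm l₂) (φ : ℝ → ℝ) :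
    rademacherE l₁ φ = rademacherE l₂ φ := by
  induction h generalizing φ with
  | nil => rfl
  | cons b _ ih => simp only [rademacherE, ih]
  | swap b c l =>
    simp only [rademacherE, add_left_comm b, add_left_comm (-b)]
    ring
  | trans _ _ ih₁ ih₂ => rw [ih₁, ih₂]

lemma rademacherE_filter (p : ℝ → Bool) (l : List ℝ) (φ : ℝ → ℝ) :
    rademacherE l φ =
      rademacherE (l.filter p) (fun x => rademacherE (l.filter (!p ·)) (fun y => φ (x + y))) := by
  rw [← rademacherE_append, rademacherE_perm (List.filter_append_perm p l)]

lemma rademacherE_abs_cons (b : ℝ) (l : List ℝ) (φ : ℝ → ℝ) :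
    rademacherE (|b| :: l) φ = rademacherE (b :: l) φ := by
  rcases abs_choice b with hb | hb
  · rw [hb]
  · simp only [hb, rademacherE, neg_neg, add_comm]

lemma rademacherE_map_abs (l : List ℝ) (φ : ℝ → ℝ) :
    rademacherE (l.map abs) φ = rademacherE l φ := by
  induction l generalizing φ with
  | nil => rfl
  | cons b l ih => rw [List.map_cons, rademacherE_abs_cons]; simp only [rademacherE, ih]

end rademacherE

section rademacherPr

lemma rademacherPr_nonneg (l : List ℝ) (S : Set ℝ) : 0 ≤ rademacherPr l S :=
  rademacherE_nonneg l (Set.indicator_nonneg fun _ _ => zero_le_one)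

lemma rademacherPr_mono (l : List ℝ) {S T : Set ℝ} (h : S ⊆ T) :
    rademacherPr l S ≤ rademacherPr l T :=
  rademacherE_mono l (Set.indicator_le_indicator_of_subset h fun _ => zero_le_one)

lemma rademacherPr_union (l : List ℝ) {S T : Set ℝ} (h : Disjoint S T) :
    rademacherPr l (S ∪ T) = rademacherPr l S + rademacherPr l T := by
  rw [rademacherPr, Set.indicator_union_of_disjoint h, rademacherE_add]
  rfl

lemma rademacherPr_Ioc_add_Ioc (l : List ℝ) {p q r : ℝ} (hpq : p ≤ q) (hqr : q ≤ r) :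
    rademacherPr l (Set.Ioc p q) + rademacherPr l (Set.Ioc q r) =
      rademacherPr l (Set.Ioc p r) := by
  rw [← rademacherPr_union l (Set.Ioc_disjoint_Ioc_of_le le_rfl),
    Set.Ioc_union_Ioc_eq_Ioc hpq hqr]

lemma rademacherPr_Ioc_add_Ioi (l : List ℝ) {p q : ℝ} (hpq : p ≤ q) :
    rademacherPr l (Set.Ioc p q) + rademacherPr l (Set.Ioi q) = rademacherPr l (Set.Ioi p) := by
  rw [← rademacherPr_union l Set.Ioc_disjoint_Ioi_same, Set.Ioc_union_Ioi_eq_Ioi hpq]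

lemma rademacherPr_cons (b : ℝ) (l : List ℝ) (S : Set ℝ) :
    rademacherPr (b :: l) S =
      (rademacherPr l ((b + ·) ⁻¹' S) + rademacherPr l ((-b + ·) ⁻¹' S)) / 2 :=
  rfl

lemma rademacherPr_abs_cons (b : ℝ) (l : List ℝ) (S : Set ℝ) :
    rademacherPr (|b| :: l) S = rademacherPr (b :: l) S :=
  rademacherE_abs_cons b l _

lemma rademacherPr_map_abs (l : List ℝ) (S : Set ℝ) :
    rademacherPr (l.map abs) S = rademacherPr l S :=
  rademacherE_map_abs l _

lemma rademacherPr_filter (p : ℝ → Bool) (l : List ℝ) (S : Set ℝ) :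
    rademacherPr l S =
      rademacherE (l.filter p) (fun x => rademacherPr (l.filter (!p ·)) ((x + ·) ⁻¹' S)) :=
  rademacherE_filter p l _

end rademacherPr

section PathTransformations

/-- The initial segment of the path started at `p` is reflected when it first exceeds `c`; at that
moment it is at most `c + β`. -/
lemma rademacherE_reflection {β c : ℝ} {φ ψ : ℝ → ℝ} (hφ : ∀ x, 0 ≤ φ x) (hψ : ∀ x, 0 ≤ ψ x)
    (hreflect : ∀ p ∈ Set.Ioc c (c + β), ∀ x, φ (p + x) ≤ ψ (-p + x))
    {l : List ℝ} (hl : ∀ b ∈ l, |b| ≤ β) {p : ℝ} (hp : p ≤ c) :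
    rademacherE l (fun x => (Set.Ioi c).indicator φ (p + x)) ≤
      rademacherE l (fun x => ψ (-p + x)) := by
  induction l generalizing p with
  | nil => simpa [rademacherE, hp] using hψ (-p)
  | cons b l ih =>
    obtain ⟨hb, hl⟩ := List.forall_mem_cons.1 hl
    have next_step (q : ℝ) (hq : q ≤ c + β) :
        rademacherE l (fun x => (Set.Ioi c).indicator φ (q + x)) ≤
          rademacherE l (fun x => ψ (-q + x)) := by
      rcases le_or_gt q c with hqc | hcq
      · exact ih hl hqc
      · exact rademacherE_mono l fun x =>
          (Set.indicator_le_self' (fun _ _ => hφ _) _).trans (hreflect q ⟨hcq, hq⟩ x)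
    have up := next_step (p + b) (by linarith [le_abs_self b])
    have down := next_step (p + -b) (by linarith [neg_le_abs b])
    simp only [neg_add, neg_neg] at up down
    simp only [rademacherE, ← add_assoc]
    linarith

/-- The initial segments of two paths started at `p` and `q` are exchanged when the second path
first exceeds the first by more than `r`; at that moment it does so by at most `r + 2 * β`. -/
lemma rademacherPr_mul_swap {β r : ℝ} {A B A' B' : Set ℝ}
    (hAB : ∀ x ∈ A, ∀ y ∈ B, r < y - x)
    (hA : ∀ d ∈ Set.Ioc r (r + 2 * β), ∀ x ∈ A, x + d ∈ A')
    (hB : ∀ d ∈ Set.Ioc r (r + 2 * β), ∀ y ∈ B, y - d ∈ B')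
    {l : List ℝ} (hl : ∀ b ∈ l, |b| ≤ β) {p q : ℝ} (hpq : q - p ≤ r) :
    rademacherPr l ((p + ·) ⁻¹' A) * rademacherPr l ((q + ·) ⁻¹' B) ≤
      rademacherPr l ((q + ·) ⁻¹' A') * rademacherPr l ((p + ·) ⁻¹' B') := by
  induction l generalizing p q with
  | nil =>
    have not_both : ¬ (p ∈ A ∧ q ∈ B) := fun h => (hAB p h.1 q h.2).not_ge hpq
    refine le_trans (le_of_eq ?_) (mul_nonneg (rademacherPr_nonneg _ _) (rademacherPr_nonneg _ _))
    simpa [rademacherPr, rademacherE, imp_iff_not_or] using not_both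
  | cons b l ih =>
    obtain ⟨hb, hl⟩ := List.forall_mem_cons.1 hl
    have next_step (p' q' : ℝ) (hd : q' - p' ≤ r + 2 * β) :
        rademacherPr l ((p' + ·) ⁻¹' A) * rademacherPr l ((q' + ·) ⁻¹' B) ≤
          rademacherPr l ((q' + ·) ⁻¹' A') * rademacherPr l ((p' + ·) ⁻¹' B') := by
      rcases le_or_gt (q' - p') r with hle | hgt
      · exact ih hl hle
      · refine mul_le_mul (rademacherPr_mono l fun x hx => ?_) (rademacherPr_mono l fun y hy => ?_)
          (rademacherPr_nonneg _ _) (rademacherPr_nonneg _ _)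
        · simpa [add_comm p', add_comm q', add_assoc] using hA _ ⟨hgt, hd⟩ _ hx
        · simpa [add_sub_right_comm] using hB _ ⟨hgt, hd⟩ _ hy
    obtain ⟨hb₁, hb₂⟩ := abs_le.1 hb
    have up_up := next_step (p + b) (q + b) (by linarith)
    have up_down := next_step (p + b) (q + -b) (by linarith)
    have down_up := next_step (p + -b) (q + b) (by linarith)
    have down_down := next_step (p + -b) (q + -b) (by linarith)
    simp only [rademacherPr_cons, Set.preimage_preimage, ← add_assoc]
    linarith

/-- Double counting of the pairs (signs, position `i` with sign `+`), weighted by `2 lᵢ`: flipping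
the sign at `i` gives a pair with sign `-`. The weights of the positive signs sum to `l.sum + x`. -/
lemma rademacherE_flip {φ ψ : ℝ → ℝ} {l : List ℝ} (hl : ∀ b ∈ l, 0 ≤ b)
    (hflip : ∀ b ∈ l, ∀ x, φ (b + x) ≤ ψ (-b + x)) :
    rademacherE l (fun x => (l.sum + x) * φ x) ≤ rademacherE l (fun x => (l.sum - x) * ψ x) := by
  induction l generalizing φ ψ with
  | nil => simp [rademacherE]
  | cons b l ih =>
    obtain ⟨hb, hl⟩ := List.forall_mem_cons.1 hl
    obtain ⟨hflip_b, hflip⟩ := List.forall_mem_cons.1 hflip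
    have flip_tail (e : ℝ) :
        rademacherE l (fun x => (l.sum + x) * φ (e + x)) ≤
          rademacherE l (fun x => (l.sum - x) * ψ (e + x)) :=
      ih hl fun c hc x => by simpa only [add_left_comm] using hflip c hc (e + x)
    have flip_head : rademacherE l (fun x => 2 * b * φ (b + x)) ≤
        rademacherE l (fun x => 2 * b * ψ (-b + x)) :=
      rademacherE_mono l fun x => mul_le_mul_of_nonneg_left (hflip_b x) (by positivity)
    have split_φ (x : ℝ) : (b + l.sum + (b + x)) * φ (b + x) =
        (l.sum + x) * φ (b + x) + 2 * b * φ (b + x) := by ring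
    have split_ψ (x : ℝ) : (b + l.sum - (-b + x)) * ψ (-b + x) =
        (l.sum - x) * ψ (-b + x) + 2 * b * ψ (-b + x) := by ring
    have cancel_φ (x : ℝ) : b + l.sum + (-b + x) = l.sum + x := by ring
    have cancel_ψ (x : ℝ) : b + l.sum - (b + x) = l.sum - x := by ring
    simp only [rademacherE, List.sum_cons, split_φ, split_ψ, cancel_φ, cancel_ψ, rademacherE_add]
    linarith [flip_tail b, flip_tail (-b)]

lemma rademacherPr_le_mul_of_flip {A B : Set ℝ} {C : ℝ} {l : List ℝ} (hl : ∀ b ∈ l, 0 ≤ b)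
    (hsum : 0 < l.sum) (hA : ∀ x ∈ A, 0 ≤ x) (hB : ∀ x ∈ B, l.sum - x ≤ l.sum * C)
    (hflip : ∀ b ∈ l, ∀ x, b + x ∈ A → -b + x ∈ B) :
    rademacherPr l A ≤ C * rademacherPr l B := by
  refine le_of_mul_le_mul_left ?_ hsum
  calc l.sum * rademacherPr l A
      = rademacherE l (fun x => l.sum * A.indicator 1 x) := (rademacherE_const_mul l _ _).symm
    _ ≤ rademacherE l (fun x => (l.sum + x) * A.indicator 1 x) :=
        rademacherE_mono l fun x => by
          by_cases hx : x ∈ A <;> simp [hx, hA]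
    _ ≤ rademacherE l (fun x => (l.sum - x) * B.indicator 1 x) :=
        rademacherE_flip hl fun b hb x => Set.indicator_le_indicator_of_subset
          (s := (b + ·) ⁻¹' A) (t := (-b + ·) ⁻¹' B) (hflip b hb) (fun _ => zero_le_one) x
    _ ≤ rademacherE l (fun x => l.sum * C * B.indicator 1 x) :=
        rademacherE_mono l fun x => by
          by_cases hx : x ∈ B <;> simp [hx, hB]
    _ = l.sum * (C * rademacherPr l B) := by rw [rademacherE_const_mul, mul_assoc]; rfl

end PathTransformations

section Windows

variable {α : ℝ} {l : List ℝ}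

lemma rademacherPr_Ioc_le_of_half_lt {u : ℝ} (hu : -α ≤ u) (hl : ∀ b ∈ l, α / 2 < b ∧ b ≤ α) :
    rademacherPr l (Set.Ioc (u + α) (u + 2 * α)) ≤
      5 * rademacherPr l (Set.Ioc (u - α) (u + α)) := by
  rcases eq_or_ne l [] with rfl | hne
  · have zero_notMem : (0 : ℝ) ∉ Set.Ioc (u + α) (u + 2 * α) := fun h => by linarith [h.1]
    exact (Set.indicator_of_notMem zero_notMem 1).trans_le
      (mul_nonneg (by norm_num) (rademacherPr_nonneg _ _))
  · obtain ⟨b, hb⟩ := List.exists_mem_of_ne_nil l hne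
    have hα : 0 < α := by linarith [hl b hb]
    have hl_nonneg : ∀ c ∈ l, 0 ≤ c := fun c hc => by linarith [hl c hc]
    have hsum : α / 2 < l.sum := (hl b hb).1.trans_le (List.single_le_sum hl_nonneg b hb)
    refine rademacherPr_le_mul_of_flip hl_nonneg (by linarith) (fun x hx => ?_) (fun x hx => ?_)
      (fun c hc x hx => ?_)
    · linarith [hx.1]
    · linarith [hx.1]
    · have := hl c hc
      exact ⟨by linarith [hx.1], by linarith [hx.2]⟩

lemma rademacherPr_Ioc_le_of_half_lt_abs {u : ℝ} (hu : -α ≤ u)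
    (hl : ∀ b ∈ l, α / 2 < |b| ∧ |b| ≤ α) :
    rademacherPr l (Set.Ioc (u + α) (u + 2 * α)) ≤
      5 * rademacherPr l (Set.Ioc (u - α) (u + α)) := by
  rw [← rademacherPr_map_abs l, ← rademacherPr_map_abs l]
  exact rademacherPr_Ioc_le_of_half_lt hu (List.forall_mem_map.2 hl)

lemma rademacherPr_Ioc_le {u : ℝ} (hα : 0 ≤ α) (hu : 0 ≤ u) (hl : ∀ b ∈ l, |b| ≤ α) :
    rademacherPr l (Set.Ioc (u + α) (u + 2 * α)) ≤
      6 * rademacherPr l (Set.Ioc (u - α) (u + α)) := by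
  set small := l.filter (fun b => |b| ≤ α / 2)
  set large := l.filter (fun b => !decide (|b| ≤ α / 2))
  have hsmall : ∀ b ∈ small, |b| ≤ α / 2 := fun b hb => by simpa using (List.mem_filter.1 hb).2
  have hlarge : ∀ b ∈ large, α / 2 < |b| ∧ |b| ≤ α := fun b hb =>
    ⟨by simpa using (List.mem_filter.1 hb).2, hl b (List.mem_filter.1 hb).1⟩
  let far (x : ℝ) : ℝ := rademacherPr large ((x + ·) ⁻¹' Set.Ioc (u + α) (u + 2 * α))
  let near (x : ℝ) : ℝ := rademacherPr large ((x + ·) ⁻¹' Set.Ioc (u - α) (u + α))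
  have reflect_small :
      rademacherE small ((Set.Ioi (α / 2)).indicator far) ≤ rademacherE small near := by
    have h := rademacherE_reflection (β := α / 2) (c := α / 2) (φ := far) (ψ := near)
      (fun x => rademacherPr_nonneg _ _) (fun x => rademacherPr_nonneg _ _)
      (fun p hp x => rademacherPr_mono large fun y hy => by
        simp only [Set.mem_preimage, Set.mem_Ioc] at hp hy ⊢
        constructor <;> linarith)
      hsmall (p := 0) (by positivity)
    simpa only [zero_add, neg_zero] using h
  have far_le (x : ℝ) : far x ≤ (Set.Ioi (α / 2)).indicator far x + 5 * near x := by
    by_cases hx : x ∈ Set.Ioi (α / 2)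
    · rw [Set.indicator_of_mem hx]
      exact le_add_of_nonneg_right (mul_nonneg (by norm_num) (rademacherPr_nonneg _ _))
    · rw [Set.indicator_of_notMem hx, zero_add]
      have h := rademacherPr_Ioc_le_of_half_lt_abs (u := u - x)
        (by linarith [Set.notMem_Ioi.1 hx]) hlarge
      simpa only [far, near, Set.preimage_const_add_Ioc, sub_add_eq_add_sub, sub_right_comm] using h
  calc rademacherPr l (Set.Ioc (u + α) (u + 2 * α))
      = rademacherE small far := rademacherPr_filter _ _ _
    _ ≤ rademacherE small (fun x => (Set.Ioi (α / 2)).indicator far x + 5 * near x) :=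
        rademacherE_mono small far_le
    _ = rademacherE small ((Set.Ioi (α / 2)).indicator far) + 5 * rademacherE small near := by
        rw [rademacherE_add, rademacherE_const_mul]
    _ ≤ 6 * rademacherE small near := by linarith
    _ = 6 * rademacherPr l (Set.Ioc (u - α) (u + α)) := by
        rw [rademacherPr_filter (fun b => |b| ≤ α / 2) l]

lemma rademacherPr_Ioc_add_three_mul_le {t : ℝ} (hα : 0 ≤ α) (ht : 0 ≤ t)
    (hl : ∀ b ∈ l, |b| ≤ α) :
    rademacherPr l (Set.Ioc (t - α) (t + 3 * α)) ≤
      49 * rademacherPr l (Set.Ioc (t - α) (t + α)) := by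
  have first : rademacherPr l (Set.Ioc (t + α) (t + 2 * α)) ≤
      6 * rademacherPr l (Set.Ioc (t - α) (t + α)) := rademacherPr_Ioc_le hα ht hl
  have second : rademacherPr l (Set.Ioc (t + 2 * α) (t + 3 * α)) ≤
      6 * rademacherPr l (Set.Ioc t (t + 2 * α)) := by
    convert rademacherPr_Ioc_le hα (add_nonneg ht hα) hl using 3 <;> ring_nf
  have middle : rademacherPr l (Set.Ioc t (t + 2 * α)) ≤
      rademacherPr l (Set.Ioc (t - α) (t + 2 * α)) :=
    rademacherPr_mono l (Set.Ioc_subset_Ioc_left (by linarith))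
  have split₂ := rademacherPr_Ioc_add_Ioc l (p := t - α) (q := t + α) (r := t + 2 * α)
    (by linarith) (by linarith)
  have split₃ := rademacherPr_Ioc_add_Ioc l (p := t - α) (q := t + 2 * α) (r := t + 3 * α)
    (by linarith) (by linarith)
  linarith

lemma rademacherPr_Ioc_mul_Ioi_le {s t : ℝ} (hst : s ≤ t) (hl : ∀ b ∈ l, |b| ≤ α) :
    rademacherPr l (Set.Ioc (s - α) (s + α)) * rademacherPr l (Set.Ioi (t + α)) ≤
      rademacherPr l (Set.Ioc (t - α) (t + 3 * α)) * rademacherPr l (Set.Ioi (s - α)) := by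
  have h := rademacherPr_mul_swap (r := t - s) (A := Set.Ioc (s - α) (s + α))
    (B := Set.Ioi (t + α)) (A' := Set.Ioc (t - α) (t + 3 * α)) (B' := Set.Ioi (s - α))
    (fun x hx y hy => by rw [Set.mem_Ioc] at hx; rw [Set.mem_Ioi] at hy; linarith)
    (fun d hd x hx => by rw [Set.mem_Ioc] at *; constructor <;> linarith)
    (fun d hd y hy => by rw [Set.mem_Ioc] at hd; rw [Set.mem_Ioi] at *; linarith)
    hl (p := 0) (q := 0) (by linarith)
  simpa only [zero_add, Set.preimage_id'] using h

lemma rademacherPr_Ioc_mul_Ioi_add_Ioi_le {s t : ℝ} (hα : 0 ≤ α) (ht : 0 ≤ t) (hst : s ≤ t)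
    (hl : ∀ b ∈ l, |b| ≤ α) :
    rademacherPr l (Set.Ioc (s - α) (s + α)) *
        (rademacherPr l (Set.Ioi (t - α)) + rademacherPr l (Set.Ioi (t + α))) ≤
      99 * (rademacherPr l (Set.Ioc (t - α) (t + α)) * rademacherPr l (Set.Ioi (s - α))) := by
  have window_le_tail : rademacherPr l (Set.Ioc (s - α) (s + α)) ≤
      rademacherPr l (Set.Ioi (s - α)) := rademacherPr_mono l Set.Ioc_subset_Ioi_self
  have far_le : rademacherPr l (Set.Ioc (s - α) (s + α)) * rademacherPr l (Set.Ioi (t + α)) ≤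
      49 * rademacherPr l (Set.Ioc (t - α) (t + α)) * rademacherPr l (Set.Ioi (s - α)) :=
    (rademacherPr_Ioc_mul_Ioi_le hst hl).trans <| mul_le_mul_of_nonneg_right
      (rademacherPr_Ioc_add_three_mul_le hα ht hl) (rademacherPr_nonneg _ _)
  have near_le := mul_le_mul_of_nonneg_left window_le_tail
    (rademacherPr_nonneg l (Set.Ioc (t - α) (t + α)))
  rw [← rademacherPr_Ioc_add_Ioi l (show t - α ≤ t + α by linarith)]
  linarith

end Windows

section Cube

variable {n : ℕ}

lemma cubeE_succ (k : Fin (n + 1)) (f : (Fin (n + 1) → Bool) → ℝ) :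
    cubeE (n + 1) f =
      (cubeE n (fun x => f (k.insertNth true x)) + cubeE n (fun x => f (k.insertNth false x))) /
        2 := by
  rw [cubeE, ← (Fin.insertNthEquiv (fun _ => Bool) k).sum_comp f, Fintype.sum_prod_type,
    Fintype.sum_bool, cubeE, cubeE, ← add_div, div_div, pow_succ]
  rfl

lemma lin_insertNth (a : Fin (n + 1) → ℝ) (k : Fin (n + 1)) (b : Bool) (x : Fin n → Bool) :
    lin (n + 1) a (k.insertNth b x) = a k * sgn1 b + lin n (k.removeNth a) x := by
  simp [lin, Fin.sum_univ_succAbove _ k, Fin.removeNth]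

lemma cubeE_comp_lin_succ (a : Fin (n + 1) → ℝ) (k : Fin (n + 1)) (φ : ℝ → ℝ) :
    cubeE (n + 1) (fun x => φ (lin (n + 1) a x)) =
      (cubeE n (fun x => φ (a k + lin n (k.removeNth a) x)) +
        cubeE n (fun x => φ (-a k + lin n (k.removeNth a) x))) / 2 := by
  simp [cubeE_succ k, lin_insertNth, sgn1]

lemma cubeE_comp_lin (a : Fin n → ℝ) (φ : ℝ → ℝ) :
    cubeE n (fun x => φ (lin n a x)) = rademacherE (List.ofFn a) φ := by
  induction n generalizing φ with
  | zero => simp [cubeE, lin, rademacherE]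
  | succ n ih =>
    rw [cubeE_comp_lin_succ a 0, ih _ fun y => φ (a 0 + y), ih _ fun y => φ (-a 0 + y),
      List.ofFn_succ]
    rfl

lemma cubeE_indicator_lin (a : Fin n → ℝ) (S : Set ℝ) :
    cubeE n (fun x => S.indicator 1 (lin n a x)) = rademacherPr (List.ofFn a) S :=
  cubeE_comp_lin a _

lemma cubeE_indicator_lin_succ (a : Fin (n + 1) → ℝ) (k : Fin (n + 1)) (S : Set ℝ) :
    cubeE (n + 1) (fun x => S.indicator 1 (lin (n + 1) a x)) =
      rademacherPr (a k :: List.ofFn (k.removeNth a)) S := by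
  rw [cubeE_comp_lin_succ a k, rademacherPr_cons, ← cubeE_indicator_lin, ← cubeE_indicator_lin]
  rfl

lemma halfspace_eq_indicator (a : Fin n → ℝ) (s : ℝ) :
    halfspace n a s = fun x => (Set.Ioi s).indicator 1 (lin n a x) := by
  ext x
  simp [halfspace, Set.indicator_apply]

lemma cubePr_eq_cubeE (P : (Fin n → Bool) → Prop) :
    cubePr n P = cubeE n (fun x => if P x then 1 else 0) := by
  rw [cubePr, cubeE, Finset.sum_boole]

lemma cubeE_halfspace_anti (a : Fin n → ℝ) {s t : ℝ} (hst : s ≤ t) :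
    cubeE n (halfspace n a t) ≤ cubeE n (halfspace n a s) := by
  simp only [halfspace_eq_indicator, cubeE_indicator_lin]
  exact rademacherPr_mono _ (Set.Ioi_subset_Ioi hst)

lemma cubeE_halfspace_succ (a : Fin (n + 1) → ℝ) (k : Fin (n + 1)) (s : ℝ) :
    cubeE (n + 1) (halfspace (n + 1) a s) =
      (rademacherPr (List.ofFn (k.removeNth a)) (Set.Ioi (s - |a k|)) +
        rademacherPr (List.ofFn (k.removeNth a)) (Set.Ioi (s + |a k|))) / 2 := by
  rw [halfspace_eq_indicator, cubeE_indicator_lin_succ a k, ← rademacherPr_abs_cons,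
    rademacherPr_cons, Set.preimage_const_add_Ioi, Set.preimage_const_add_Ioi, sub_neg_eq_add]

lemma not_lt_add_iff_lt_neg_add_iff (c s y : ℝ) :
    ¬ (s < c + y ↔ s < -c + y) ↔ y ∈ Set.Ioc (s - |c|) (s + |c|) := by
  rw [Set.mem_Ioc]
  grind

lemma halfspace_ne_halfspace_iff (a : Fin n → ℝ) (s : ℝ) (x y : Fin n → Bool) :
    halfspace n a s x ≠ halfspace n a s y ↔ ¬ (s < lin n a x ↔ s < lin n a y) := by
  unfold halfspace
  split_ifs <;> simp [*]

lemma halfspace_insertNth_ne_iff (a : Fin (n + 1) → ℝ) (k : Fin (n + 1)) (s : ℝ) (b : Bool)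
    (x : Fin n → Bool) :
    halfspace (n + 1) a s (k.insertNth b x) ≠ halfspace (n + 1) a s (k.insertNth (!b) x) ↔
      lin n (k.removeNth a) x ∈ Set.Ioc (s - |a k|) (s + |a k|) := by
  have sgn1_not : sgn1 (!b) = -sgn1 b := by cases b <;> simp [sgn1]
  have abs_sgn1 : |sgn1 b| = 1 := by cases b <;> simp [sgn1]
  rw [halfspace_ne_halfspace_iff, lin_insertNth, lin_insertNth, sgn1_not, mul_neg,
    not_lt_add_iff_lt_neg_add_iff, abs_mul, abs_sgn1, mul_one]

lemma infl_halfspace_succ (a : Fin (n + 1) → ℝ) (k : Fin (n + 1)) (s : ℝ) :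
    infl (n + 1) k (halfspace (n + 1) a s) =
      rademacherPr (List.ofFn (k.removeNth a)) (Set.Ioc (s - |a k|) (s + |a k|)) := by
  rw [infl, cubePr_eq_cubeE, cubeE_succ k, ← cubeE_indicator_lin]
  simp only [Fin.insertNth_apply_same, Fin.update_insertNth, halfspace_insertNth_ne_iff,
    add_self_div_two, Set.indicator_apply, Pi.one_apply]

lemma infl_mul_cubeE_le {a : Fin n → ℝ} {k : Fin n} (hk : ∀ i, |a i| ≤ |a k|) {s t : ℝ}
    (ht : 0 ≤ t) (hst : s ≤ t) :
    infl n k (halfspace n a s) * cubeE n (halfspace n a t) ≤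
      99 * (infl n k (halfspace n a t) * cubeE n (halfspace n a s)) := by
  cases n with
  | zero => exact k.elim0
  | succ n =>
    have hl : ∀ b ∈ List.ofFn (k.removeNth a), |b| ≤ |a k| :=
      List.forall_mem_ofFn_iff.2 fun i => hk _
    have key := rademacherPr_Ioc_mul_Ioi_add_Ioi_le (abs_nonneg (a k)) ht hst hl
    have extra_nonneg := mul_nonneg
      (rademacherPr_nonneg (List.ofFn (k.removeNth a)) (Set.Ioc (t - |a k|) (t + |a k|)))
      (rademacherPr_nonneg (List.ofFn (k.removeNth a)) (Set.Ioi (s + |a k|)))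
    rw [infl_halfspace_succ, infl_halfspace_succ, cubeE_halfspace_succ a k,
      cubeE_halfspace_succ a k]
    linarith

end Cube

theorem relative_influence_increase_general {n : ℕ} {a : Fin n → ℝ} {k : Fin n}
    (hk : ∀ i, |a i| ≤ |a k|) {s t : ℝ} (ht : 0 ≤ t) (hst : s ≤ t)
    (hpos : 0 < cubeE n (halfspace n a t)) :
    infl n k (halfspace n a s) / cubeE n (halfspace n a s) ≤
      99 * (infl n k (halfspace n a t) / cubeE n (halfspace n a t)) := by
  rw [← mul_div_assoc, div_le_div_iff₀ (hpos.trans_le (cubeE_halfspace_anti a hst)) hpos, mul_assoc]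
  exact infl_mul_cubeE_le hk ht hst

/-- **The normalized first influence is increasing up to a constant.** There is a
universal `C` such that for `a₁ ≥ ... ≥ aₙ ≥ 0` with `∑ aᵢ² = 1` and halfspaces
`f_s = 1{a·x > s}`: for all `t ≥ s ≥ 0` with `E[f_t] > 0`,
`I₁(f_s)/E[f_s] ≤ C·I₁(f_t)/E[f_t]`. -/
theorem relative_influence_increase :
    ∃ C : ℝ, 0 < C ∧ ∀ (n : ℕ) (hn : 0 < n) (a : Fin n → ℝ),
      (∀ i, 0 ≤ a i) → (∀ i j : Fin n, i ≤ j → a j ≤ a i) →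
      (∑ i, (a i) ^ 2) = 1 →
      ∀ s t : ℝ, 0 ≤ s → s ≤ t → 0 < cubeE n (halfspace n a t) →
        infl n ⟨0, hn⟩ (halfspace n a s) / cubeE n (halfspace n a s) ≤
          C * (infl n ⟨0, hn⟩ (halfspace n a t) / cubeE n (halfspace n a t)) := by
  refine ⟨99, by norm_num, fun n hn a ha hanti _ s t hs hst hpos => ?_⟩
  refine relative_influence_increase_general (fun i => ?_) (hs.trans hst) hst hpos
  exact abs_le_abs_of_nonneg (ha i) (hanti _ i (Nat.zero_le _))

end
end
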